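/- Let m ≥ 1 and let α^{(1)}_0, ..., α^{(m)}_0 be real numbers on which the Jacobi–Perron algorithm is well defined for all steps (the fractional part α^{(m)}_n − ⌊α^{(m)}_n⌋ is nonzero for every n ≥ 0). Let a^{(i)}_n = ⌊α^{(i)}_n⌋ be the resulting partial quotients and let A^{(i)}_n, for i = 1, ..., m+1, be the associated convergent numerator and denominator sequences. If each of the m+1 integer sequences (A^{(i)}_n) is a linear recurrence sequence (satisfies a linear recurrence with constant complex coefficients for all sufficiently large n), then each of the m sequences of partial quotients (a^{(i)}_n) is eventually periodic. -/

import Mathlib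

/-- The convergent numerator/denominator sequences `A⁽ⁱ⁾` of a multidimensional
continued fraction with partial quotient sequences `a⁽¹⁾, …, a⁽ᵐ⁾`, with the
index shifted by `m`:  `convA m a i n` is `A⁽ⁱ⁺¹⁾_{n - m}` of the paper. -/
def convA (m : ℕ) (a : Fin m → ℕ → ℤ) (i : Fin (m + 1)) : ℕ → ℤ
  | n =>
    if h : n ≤ m then
      if n = m then
        if hi : (i : ℕ) < m then a ⟨i, hi⟩ 0 else 1
      else
        if (i : ℕ) = m then 0 else if n = m - 1 - (i : ℕ) then 1 else 0
    else
      (∑ j : Fin m, a j (n - m) * convA m a i (n - ((j : ℕ) + 1))) +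
        convA m a i (n - (m + 1))
  termination_by n => n
  decreasing_by all_goals omega

/-- An integer sequence is a linear recurrence sequence if it satisfies, for all
sufficiently large `n`, a recurrence `s (n+k) = c₁ • s (n+k-1) + ⋯ + c_k • s n`
with constant complex coefficients. -/
def IsLinearRecurrenceSeq (s : ℕ → ℤ) : Prop :=
  ∃ k : ℕ, 1 ≤ k ∧ ∃ c : Fin k → ℂ, ∃ N : ℕ, ∀ n, N ≤ n →
    (s (n + k) : ℂ) = ∑ t : Fin k, c t * (s (n + k - 1 - (t : ℕ)) : ℂ)

open Polynomial

/-- The left shift `(s n) ↦ (s (n + 1))` on complex sequences. -/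
noncomputable def seqShift : Module.End ℂ (ℕ → ℂ) := LinearMap.funLeft ℂ ℂ (· + 1)

theorem seqShift_pow_apply (t : ℕ) (f : ℕ → ℂ) (n : ℕ) : (seqShift ^ t) f n = f (n + t) := by
  induction t generalizing f with
  | zero => simp
  | succ t ih =>
    rw [pow_succ, Module.End.mul_apply, ih]
    simp [seqShift, LinearMap.funLeft_apply, add_assoc]

theorem aeval_seqShift_apply (p : ℂ[X]) (f : ℕ → ℂ) (n : ℕ) :
    aeval seqShift p f n = ∑ t ∈ Finset.range (p.natDegree + 1), p.coeff t * f (n + t) := by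
  rw [aeval_eq_sum_range]
  simp [LinearMap.sum_apply, Finset.sum_apply, seqShift_pow_apply]

theorem aeval_seqShift_eventually_zero (p : ℂ[X]) {f : ℕ → ℂ} {N : ℕ}
    (hf : ∀ n, N ≤ n → f n = 0) (n : ℕ) (hn : N ≤ n) : aeval seqShift p f n = 0 := by
  rw [aeval_seqShift_apply]
  exact Finset.sum_eq_zero fun t _ => by rw [hf _ (by omega), mul_zero]

/-- A linear recurrence sequence is eventually annihilated by a monic polynomial in the shift. -/
theorem IsLinearRecurrenceSeq.exists_monic {s : ℕ → ℤ} (hs : IsLinearRecurrenceSeq s) :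
    ∃ p : ℂ[X], p.Monic ∧ ∃ N : ℕ, ∀ n, N ≤ n →
      aeval seqShift p (fun n => (s n : ℂ)) n = 0 := by
  obtain ⟨k, hk, c, N, h⟩ := hs
  refine ⟨X ^ k - ∑ t : Fin k, C (c t) * X ^ (k - 1 - (t : ℕ)), ?_, N, fun n hn => ?_⟩
  · refine monic_X_pow_sub ?_
    refine (degree_sum_le _ _).trans_lt ((Finset.sup_lt_iff (WithBot.bot_lt_coe k)).2 fun t _ => ?_)
    refine (degree_C_mul_X_pow_le _ _).trans_lt ?_
    have := t.isLt
    exact Nat.cast_lt.2 (by omega)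
  · simp only [map_sub, map_sum, map_mul, map_pow, aeval_X, aeval_C, LinearMap.sub_apply,
      LinearMap.sum_apply, Pi.sub_apply, Finset.sum_apply, Module.End.mul_apply,
      Module.algebraMap_end_apply, Pi.smul_apply, seqShift_pow_apply, smul_eq_mul]
    rw [h n hn, sub_eq_zero]
    refine Finset.sum_congr rfl fun t _ => ?_
    have := t.isLt
    rw [show n + k - 1 - (t : ℕ) = n + (k - 1 - t) by omega]

/-- Finitely many linear recurrence sequences satisfy a common linear recurrence. -/
theorem exists_common_recurrence {ι : Type*} [Fintype ι] {s : ι → ℕ → ℤ}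
    (hs : ∀ i, IsLinearRecurrenceSeq (s i)) :
    ∃ (d : ℕ) (c : ℕ → ℂ) (N : ℕ), ∀ i n, N ≤ n →
      (s i (n + d) : ℂ) = ∑ t ∈ Finset.range d, c t * (s i (n + t) : ℂ) := by
  classical
  choose p hp N hN using fun i => (hs i).exists_monic
  refine ⟨(∏ i, p i).natDegree, fun t => -(∏ i, p i).coeff t, Finset.univ.sup N,
    fun i n hn => ?_⟩
  have hmonic : (∏ i, p i).Monic := monic_prod_of_monic _ _ fun i _ => hp i
  have hzero : aeval seqShift (∏ i, p i) (fun n => (s i n : ℂ)) n = 0 := by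
    rw [← Finset.prod_erase_mul _ _ (Finset.mem_univ i), map_mul, Module.End.mul_apply]
    exact aeval_seqShift_eventually_zero _ (hN i) n
      ((Finset.le_sup (Finset.mem_univ i)).trans hn)
  rw [aeval_seqShift_apply, Finset.sum_range_succ, hmonic.coeff_natDegree, one_mul] at hzero
  simp only [neg_mul, Finset.sum_neg_distrib]
  exact eq_neg_of_add_eq_zero_right hzero

/-- A linear recurrence sequence grows at most exponentially. -/
theorem exists_norm_le_mul_pow {f : ℕ → ℂ} {d N : ℕ} {c : ℕ → ℂ}
    (h : ∀ n, N ≤ n → f (n + d) = ∑ t ∈ Finset.range d, c t * f (n + t)) :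
    ∃ K R : ℝ, 1 ≤ R ∧ ∀ n, ‖f n‖ ≤ K * R ^ n := by
  have hS : 0 ≤ ∑ t ∈ Finset.range d, ‖c t‖ := Finset.sum_nonneg fun _ _ => norm_nonneg _
  have hI : 0 ≤ ∑ t ∈ Finset.range (N + d), ‖f t‖ := Finset.sum_nonneg fun _ _ => norm_nonneg _
  set S := ∑ t ∈ Finset.range d, ‖c t‖
  set I := ∑ t ∈ Finset.range (N + d), ‖f t‖
  have hR : 1 ≤ 1 + S := by linarith
  refine ⟨1 + I, 1 + S, hR, fun n => ?_⟩
  induction n using Nat.strong_induction_on with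
  | _ n ih =>
    by_cases hn : n < N + d
    · have h1 : ‖f n‖ ≤ I :=
        Finset.single_le_sum (f := fun t => ‖f t‖) (fun _ _ => norm_nonneg _)
          (Finset.mem_range.2 hn)
      have h2 : 1 ≤ (1 + S) ^ n := one_le_pow₀ hR
      nlinarith
    · obtain ⟨r, rfl⟩ : ∃ r, n = r + d := ⟨n - d, by omega⟩
      rcases Nat.eq_zero_or_pos d with rfl | hd
      · rw [h r (by omega)]
        simp only [Finset.range_zero, Finset.sum_empty, norm_zero]
        positivity
      calc ‖f (r + d)‖ ≤ ∑ t ∈ Finset.range d, ‖c t‖ * ((1 + I) * (1 + S) ^ (r + d - 1)) := by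
            rw [h r (by omega)]
            refine (norm_sum_le _ _).trans (Finset.sum_le_sum fun t ht => ?_)
            have ht := Finset.mem_range.1 ht
            rw [norm_mul]
            refine mul_le_mul_of_nonneg_left ((ih _ (by omega)).trans ?_) (norm_nonneg _)
            refine mul_le_mul_of_nonneg_left (pow_le_pow_right₀ hR (by omega)) (by linarith)
        _ = S * ((1 + I) * (1 + S) ^ (r + d - 1)) := by rw [← Finset.sum_mul]
        _ ≤ (1 + S) * ((1 + I) * (1 + S) ^ (r + d - 1)) := by
            refine mul_le_mul_of_nonneg_right (by linarith) (by positivity)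
        _ = (1 + I) * (1 + S) ^ (r + d) := by
            conv_rhs => rw [show r + d = (r + d - 1) + 1 by omega, pow_succ]
            ring

/-- If the partial products of a sequence of positive integers grow at most exponentially, then
for every `L` there is a bound met on infinitely many of the consecutive blocks of length `L`. -/
theorem exists_infinite_bounded_blocks {b : ℕ → ℤ} (hb : ∀ n, 1 ≤ b n) {K R : ℝ}
    (hR : 1 ≤ R) (h : ∀ n, ((∏ k ∈ Finset.range n, b k : ℤ) : ℝ) ≤ K * R ^ n)
    (L : ℕ) :
    ∃ B : ℤ, {t : ℕ | ∀ u < L, b (L * t + u) ≤ B}.Infinite := by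
  obtain ⟨B, hB⟩ := exists_int_gt (R ^ L)
  have hRL : 1 ≤ R ^ L := one_le_pow₀ hR
  have hB0 : (0 : ℝ) < B := by linarith
  refine ⟨B, fun hfin => ?_⟩
  obtain ⟨T, hT⟩ := hfin.bddAbove
  have hblock (t : ℕ) (ht : T < t) : B ≤ ∏ u ∈ Finset.range L, b (L * t + u) := by
    have hnot : ¬ ∀ u < L, b (L * t + u) ≤ B := fun hmem => absurd (hT hmem) (by omega)
    push Not at hnot
    obtain ⟨u, hu, hlt⟩ := hnot
    refine hlt.le.trans ?_
    rw [← Finset.mul_prod_erase _ _ (Finset.mem_range.2 hu)]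
    refine le_mul_of_one_le_right (by linarith [hb (L * t + u)]) ?_
    exact Int.add_one_le_iff.2 (Finset.prod_pos fun v _ => by linarith [hb (L * t + v)])
  have hprod (n : ℕ) : B ^ n ≤ ∏ k ∈ Finset.range (L * (T + 1 + n)), b k := by
    induction n with
    | zero =>
      rw [pow_zero]
      exact Int.add_one_le_iff.2 (Finset.prod_pos fun k _ => by linarith [hb k])
    | succ n ih =>
      rw [show L * (T + 1 + (n + 1)) = L * (T + 1 + n) + L by ring, Finset.prod_range_add, pow_succ]
      have hB0' : (0 : ℤ) < B := by exact_mod_cast hB0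
      exact mul_le_mul ih (hblock _ (by omega)) hB0'.le
        (Finset.prod_nonneg fun k _ => by linarith [hb k])
  have hratio : 1 < (B : ℝ) / R ^ L := (one_lt_div (by linarith)).2 hB
  obtain ⟨n, hn⟩ := pow_unbounded_of_one_lt (K * (R ^ L) ^ (T + 1)) hratio
  have h1 : ((B ^ n : ℤ) : ℝ) ≤ K * R ^ (L * (T + 1 + n)) :=
    (Int.cast_le.2 (hprod n)).trans (h _)
  rw [div_pow, lt_div_iff₀ (by positivity)] at hn
  push_cast at h1
  rw [pow_mul, pow_add] at h1
  linarith

/-- If every term is determined by the `L` preceding ones and, along infinitely many of the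
consecutive blocks of length `L`, the sequence takes values in a finite set, then it is eventually
periodic. -/
theorem exists_period_of_window {β : Type*} {a : ℕ → β} {L N : ℕ} (hL : 0 < L)
    (hdet : ∀ r r', N ≤ r → N ≤ r' → (∀ u < L, a (r + u) = a (r' + u)) → a (r + L) = a (r' + L))
    {F : Set β} (hF : F.Finite) (hinf : {t : ℕ | ∀ u < L, a (L * t + u) ∈ F}.Infinite) :
    ∃ M q : ℕ, 1 ≤ q ∧ ∀ n, M ≤ n → a (n + q) = a n := by
  have hinf' := hinf.sdiff (Set.finite_lt_nat N)
  obtain ⟨t, ht, t', ht', hne, heq⟩ := hinf'.exists_ne_map_eq_of_mapsTo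
    (f := fun t => fun u : Fin L => a (L * t + u)) (t := Set.univ.pi fun _ => F)
    (fun t ht u _ => ht.1 u u.isLt) (Set.Finite.pi fun _ => hF)
  wlog hlt : t < t' generalizing t t'
  · exact this t' ht' t ht hne.symm heq.symm (by omega)
  have hNt : N ≤ t := not_lt.1 ht.2
  have htL : t ≤ L * t := Nat.le_mul_of_pos_left _ hL
  have hlt' : L * t < L * t' := Nat.mul_lt_mul_of_pos_left hlt hL
  have key (u : ℕ) : a (L * t + u) = a (L * t' + u) := by
    induction u using Nat.strong_induction_on with
    | _ u ih =>
      by_cases hu : u < L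
      · exact congrFun heq ⟨u, hu⟩
      · have := hdet (L * t + (u - L)) (L * t' + (u - L)) (by omega) (by omega) fun w hw => by
          rw [add_assoc, add_assoc]
          exact ih _ (by omega)
        rwa [add_assoc, add_assoc, Nat.sub_add_cancel (by omega)] at this
  refine ⟨L * t, L * t' - L * t, by omega, fun n hn => ?_⟩
  have := key (n - L * t)
  rw [show L * t + (n - L * t) = n by omega,
    show L * t' + (n - L * t) = n + (L * t' - L * t) by omega] at this
  exact this.symm

theorem convA_add (m : ℕ) (a : Fin m → ℕ → ℤ) (i : Fin (m + 1)) (r : ℕ) :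
    convA m a i (r + m + 1) =
      (∑ j : Fin m, a j (r + 1) * convA m a i (r + (m - (j : ℕ)))) + convA m a i r := by
  rw [convA, dif_neg (by omega), show r + m + 1 - m = r + 1 by omega,
    show r + m + 1 - (m + 1) = r by omega]
  congr 1
  refine Finset.sum_congr rfl fun j _ => ?_
  have := j.isLt
  rw [show r + m + 1 - ((j : ℕ) + 1) = r + (m - (j : ℕ)) by omega]

/-- The complex column vector `(A⁽¹⁾ₙ, …, A⁽ᵐ⁺¹⁾ₙ)` (index shifted by `m`). -/
def convVec (m : ℕ) (a : Fin m → ℕ → ℤ) (n : ℕ) : Fin (m + 1) → ℂ := fun i => (convA m a i n : ℂ)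

theorem convVec_add (m : ℕ) (a : Fin m → ℕ → ℤ) (r : ℕ) :
    convVec m a (r + m + 1) =
      (∑ j : Fin m, (a j (r + 1) : ℂ) • convVec m a (r + (m - (j : ℕ)))) + convVec m a r := by
  ext i
  simp [convVec, convA_add, Finset.sum_apply]

theorem convVec_of_lt (m : ℕ) (a : Fin m → ℕ → ℤ) (i : Fin m) :
    convVec m a (m - 1 - (i : ℕ)) = Pi.single i.castSucc 1 := by
  ext k
  have := i.isLt
  have := k.isLt
  rw [convVec, convA, dif_pos (by omega), if_neg (by omega)]
  by_cases hk : k = i.castSucc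
  · subst hk
    simp [i.isLt.ne]
  · have hk' : (k : ℕ) ≠ i := fun h => hk (Fin.ext h)
    rw [Pi.single_eq_of_ne hk]
    split_ifs <;> first | omega | simp

theorem convVec_self (m : ℕ) (a : Fin m → ℕ → ℤ) :
    convVec m a m =
      (∑ i : Fin m, (a i 0 : ℂ) • Pi.single i.castSucc 1) + Pi.single (Fin.last m) 1 := by
  ext k
  rw [convVec, convA, dif_pos le_rfl, if_pos rfl]
  refine Fin.lastCases ?_ (fun k => ?_) k
  · simp [Finset.sum_apply, (Fin.castSucc_lt_last _).ne']
  · simp [Finset.sum_apply, Pi.single_apply, (Fin.castSucc_lt_last _).ne, Fin.castSucc_inj]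

theorem span_convVec (m : ℕ) (a : Fin m → ℕ → ℤ) (r : ℕ) :
    Submodule.span ℂ (Set.range fun s : Fin (m + 1) => convVec m a (r + (s : ℕ))) = ⊤ := by
  have mem (r s : ℕ) (hs : s ≤ m) : convVec m a (r + s) ∈
      Submodule.span ℂ (Set.range fun s : Fin (m + 1) => convVec m a (r + (s : ℕ))) :=
    Submodule.subset_span ⟨⟨s, by omega⟩, rfl⟩
  induction r with
  | zero =>
    have hsingle (i : Fin m) : (Pi.single i.castSucc 1 : Fin (m + 1) → ℂ) ∈
        Submodule.span ℂ (Set.range fun s : Fin (m + 1) => convVec m a (0 + (s : ℕ))) := by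
      rw [← convVec_of_lt m a i]
      simpa using mem 0 (m - 1 - i) (by omega)
    rw [eq_top_iff, ← (Pi.basisFun ℂ (Fin (m + 1))).span_eq, Submodule.span_le]
    rintro _ ⟨k, rfl⟩
    rw [Pi.basisFun_apply]
    refine Fin.lastCases ?_ hsingle k
    rw [← sub_eq_of_eq_add' (convVec_self m a)]
    refine Submodule.sub_mem _ ?_ (Submodule.sum_mem _ fun i _ =>
      Submodule.smul_mem _ _ (hsingle i))
    simpa using mem 0 m le_rfl
  | succ r ih =>
    have hmem (s : ℕ) (hs : s < m) : convVec m a (r + (s + 1)) ∈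
        Submodule.span ℂ (Set.range fun s : Fin (m + 1) => convVec m a (r + 1 + (s : ℕ))) := by
      rw [show r + (s + 1) = r + 1 + s by omega]
      exact mem _ _ hs.le
    rw [eq_top_iff, ← ih, Submodule.span_le]
    rintro _ ⟨⟨s, hs⟩, rfl⟩
    rcases s with _ | s
    · change convVec m a r ∈ _
      rw [← sub_eq_of_eq_add' (convVec_add m a r)]
      refine Submodule.sub_mem _ ?_ (Submodule.sum_mem _ fun j _ => Submodule.smul_mem _ _ ?_)
      · rw [show r + m + 1 = r + 1 + m by omega]
        exact mem _ _ le_rfl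
      · have := j.isLt
        rw [show m - (j : ℕ) = (m - 1 - j) + 1 by omega]
        exact hmem _ (by omega)
    · exact hmem s (by omega)

theorem linearIndependent_convVec (m : ℕ) (a : Fin m → ℕ → ℤ) (r : ℕ) :
    LinearIndependent ℂ fun s : Fin (m + 1) => convVec m a (r + (s : ℕ)) :=
  linearIndependent_of_top_le_span_of_card_eq_finrank (span_convVec m a r).ge (by simp)

/-- If the vectors of convergents satisfy a linear recurrence of order `d`, then each vector of
partial quotients is determined by the `d + 1` preceding ones. -/
theorem partialQuotient_eq_of_window {m : ℕ} {a : Fin m → ℕ → ℤ} {d N : ℕ} {c : ℕ → ℂ}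
    (hrec : ∀ n, N ≤ n →
      convVec m a (n + d) = ∑ t ∈ Finset.range d, c t • convVec m a (n + t))
    {r r' : ℕ} (hr : N ≤ r) (hr' : N ≤ r')
    (hwin : ∀ u < d + 1, ∀ j, a j (r + u + 1) = a j (r' + u + 1)) (j : Fin m) :
    a j (r + (d + 1) + 1) = a j (r' + (d + 1) + 1) := by
  let b := Module.Basis.mk (linearIndependent_convVec m a r) (span_convVec m a r).ge
  let P : (Fin (m + 1) → ℂ) →ₗ[ℂ] (Fin (m + 1) → ℂ) :=
    b.constr ℂ fun s : Fin (m + 1) => convVec m a (r' + (s : ℕ))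
  have hP (s : ℕ) (hs : s < m + 1 + (d + 1)) :
      P (convVec m a (r + s)) = convVec m a (r' + s) := by
    induction s using Nat.strong_induction_on with
    | _ s ih =>
      by_cases hsm : s < m + 1
      · have := b.constr_basis ℂ (fun s : Fin (m + 1) => convVec m a (r' + (s : ℕ))) ⟨s, hsm⟩
        rwa [Module.Basis.mk_apply] at this
      · obtain ⟨u, rfl⟩ : ∃ u, s = u + m + 1 := ⟨s - (m + 1), by omega⟩
        have e (r : ℕ) : r + (u + m + 1) = r + u + m + 1 := by omega
        rw [e, e, convVec_add, convVec_add, map_add, map_sum,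
          ih u (by omega) (by omega)]
        congr 1
        refine Finset.sum_congr rfl fun j _ => ?_
        rw [map_smul, hwin u (by omega) j, add_assoc r u, add_assoc r' u (m - (j : ℕ)),
          ih _ (by omega) (by omega)]
  have hnext : P (convVec m a (r + (d + 1) + m + 1)) = convVec m a (r' + (d + 1) + m + 1) := by
    have e (r : ℕ) : r + (d + 1) + m + 1 = r + m + 2 + d := by omega
    rw [e, e, hrec _ (by omega), hrec _ (by omega), map_sum]
    refine Finset.sum_congr rfl fun t ht => ?_
    have ht := Finset.mem_range.1 ht
    have e' (r : ℕ) : r + m + 2 + t = r + (m + 2 + t) := by omega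
    rw [map_smul, e', e', hP _ (by omega)]
  rw [convVec_add, convVec_add, map_add, map_sum, hP _ (by omega), add_left_inj] at hnext
  have hsum : ∑ j : Fin m, ((a j (r + (d + 1) + 1) : ℂ) - a j (r' + (d + 1) + 1)) •
      convVec m a (r' + (d + 1) + (m - (j : ℕ))) = 0 := by
    simp only [sub_smul, Finset.sum_sub_distrib, sub_eq_zero]
    rw [← hnext]
    refine Finset.sum_congr rfl fun j _ => ?_
    rw [map_smul, add_assoc r (d + 1) (m - (j : ℕ)), hP _ (by omega), add_assoc r' (d + 1)]
  have hli : LinearIndependent ℂ fun j : Fin m =>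
      convVec m a (r' + (d + 1) + (m - (j : ℕ))) := by
    refine (linearIndependent_convVec m a (r' + (d + 1))).comp
      (fun j : Fin m => (⟨m - j, by omega⟩ : Fin (m + 1))) fun x y hxy => ?_
    have := Fin.mk.inj_iff.1 hxy
    omega
  have := Fintype.linearIndependent_iff.1 hli _ hsum j
  exact_mod_cast sub_eq_zero.1 this

/-- The denominators of the convergents dominate the products of the first partial quotients. -/
theorem prod_le_convA_last {m : ℕ} (hm : 0 < m) {a : Fin m → ℕ → ℤ}
    (ha : ∀ j n, 0 ≤ a j (n + 1)) (n : ℕ) :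
    ∏ k ∈ Finset.range n, a ⟨0, hm⟩ (k + 1) ≤ convA m a (Fin.last m) (n + m) := by
  have hnonneg (n : ℕ) : 0 ≤ convA m a (Fin.last m) n := by
    induction n using Nat.strong_induction_on with
    | _ n ih =>
      by_cases hn : n ≤ m
      · rw [convA, dif_pos hn]
        simp only [Fin.val_last, lt_irrefl, dite_false, if_true]
        split_ifs <;> simp
      · obtain ⟨r, rfl⟩ : ∃ r, n = r + m + 1 := ⟨n - (m + 1), by omega⟩
        rw [convA_add]
        exact add_nonneg (Finset.sum_nonneg fun j _ => mul_nonneg (ha j r) (ih _ (by omega)))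
          (ih _ (by omega))
  induction n with
  | zero => rw [zero_add, convA]; simp
  | succ n ih =>
    rw [Finset.prod_range_succ, add_right_comm, convA_add, mul_comm]
    calc a ⟨0, hm⟩ (n + 1) * ∏ k ∈ Finset.range n, a ⟨0, hm⟩ (k + 1)
        ≤ a ⟨0, hm⟩ (n + 1) * convA m a (Fin.last m) (n + m) :=
          mul_le_mul_of_nonneg_left ih (ha _ n)
      _ ≤ ∑ j : Fin m, a j (n + 1) * convA m a (Fin.last m) (n + (m - (j : ℕ))) :=
          Finset.single_le_sum
            (f := fun j : Fin m => a j (n + 1) * convA m a (Fin.last m) (n + (m - (j : ℕ))))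
            (fun j _ => mul_nonneg (ha j n) (hnonneg _)) (Finset.mem_univ (⟨0, hm⟩ : Fin m))
      _ ≤ _ := le_add_of_nonneg_right (hnonneg _)

/-- If the Jacobi–Perron algorithm is well defined on `α⁽¹⁾₀, …, α⁽ᵐ⁾₀` and all the
sequences of convergent numerators and denominators `A⁽¹⁾, …, A⁽ᵐ⁺¹⁾` associated to
the partial quotients `a⁽ⁱ⁾ₙ = ⌊α⁽ⁱ⁾ₙ⌋` are linear recurrence sequences, then all the
sequences of partial quotients are eventually periodic. -/
theorem jacobiPerron_eventually_periodic_of_linear_recurrence (m : ℕ) (hm : 1 ≤ m)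
    (α : ℕ → Fin m → ℝ)
    (hfrac : ∀ n : ℕ, Int.fract (α n ⟨m - 1, by omega⟩) ≠ 0)
    (hstep1 : ∀ n : ℕ,
      α (n + 1) ⟨0, by omega⟩ = 1 / Int.fract (α n ⟨m - 1, by omega⟩))
    (hstep2 : ∀ n : ℕ, ∀ i : Fin m, 0 < (i : ℕ) →
      α (n + 1) i =
        Int.fract (α n ⟨(i : ℕ) - 1, (Nat.sub_le _ _).trans_lt i.isLt⟩) /
          Int.fract (α n ⟨m - 1, by omega⟩))
    (hA : ∀ i : Fin (m + 1),
      IsLinearRecurrenceSeq (fun n => convA m (fun j n => ⌊α n j⌋) i n)) :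
    ∀ j : Fin m, ∃ N q : ℕ, 1 ≤ q ∧ ∀ n, N ≤ n → ⌊α (n + q) j⌋ = ⌊α n j⌋ := by
  have hfpos (n : ℕ) : 0 < Int.fract (α n ⟨m - 1, by omega⟩) :=
    (Int.fract_nonneg _).lt_of_ne' (hfrac n)
  have hfirst (n : ℕ) : 1 ≤ ⌊α (n + 1) ⟨0, hm⟩⌋ := by
    rw [Int.le_floor, hstep1, Int.cast_one, le_div_iff₀ (hfpos n), one_mul]
    exact (Int.fract_lt_one _).le
  have hbounds (n : ℕ) (j : Fin m) :
      0 ≤ ⌊α (n + 1) j⌋ ∧ ⌊α (n + 1) j⌋ ≤ ⌊α (n + 1) ⟨0, hm⟩⌋ := by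
    rcases Nat.eq_zero_or_pos (j : ℕ) with hj | hj
    · obtain rfl : j = ⟨0, hm⟩ := Fin.ext hj
      exact ⟨zero_le_one.trans (hfirst n), le_rfl⟩
    · rw [hstep2 n j hj, hstep1 n]
      refine ⟨Int.floor_nonneg.2 (div_nonneg (Int.fract_nonneg _) (hfpos n).le),
        Int.floor_le_floor ?_⟩
      exact div_le_div_of_nonneg_right (Int.fract_lt_one _).le (hfpos n).le
  obtain ⟨d, c, N, hrec⟩ := exists_common_recurrence hA
  have hrecVec (n : ℕ) (hn : N ≤ n) : convVec m (fun j n => ⌊α n j⌋) (n + d) =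
      ∑ t ∈ Finset.range d, c t • convVec m (fun j n => ⌊α n j⌋) (n + t) := by
    ext i
    simpa [convVec, Finset.sum_apply] using hrec i n hn
  obtain ⟨K, R, hR, hgrowth⟩ := exists_norm_le_mul_pow
    (f := fun n => (convA m (fun j n => ⌊α n j⌋) (Fin.last m) n : ℂ)) (hrec (Fin.last m))
  have hprod (n : ℕ) : ((∏ k ∈ Finset.range n, ⌊α (k + 1) ⟨0, hm⟩⌋ : ℤ) : ℝ) ≤
      K * R ^ m * R ^ n := by
    refine (Int.cast_le.2 (prod_le_convA_last (a := fun j n => ⌊α n j⌋) hm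
      (fun j n => (hbounds n j).1) n)).trans ?_
    refine (le_abs_self _).trans ?_
    rw [← Complex.norm_intCast, mul_assoc, ← pow_add, add_comm m n]
    exact hgrowth (n + m)
  obtain ⟨B, hB⟩ := exists_infinite_bounded_blocks hfirst hR hprod (d + 1)
  have hsub : {t : ℕ | ∀ u < d + 1, ⌊α ((d + 1) * t + u + 1) ⟨0, hm⟩⌋ ≤ B} ⊆
      {t : ℕ | ∀ u < d + 1, (fun j : Fin m => ⌊α ((d + 1) * t + u + 1) j⌋) ∈
        Set.univ.pi fun _ : Fin m => Set.Icc (0 : ℤ) B} :=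
    fun t ht u hu j _ => ⟨(hbounds _ j).1, (hbounds _ j).2.trans (ht u hu)⟩
  obtain ⟨M, q, hq, hper⟩ := exists_period_of_window
    (a := fun n (j : Fin m) => ⌊α (n + 1) j⌋) (L := d + 1) (N := N) (Nat.succ_pos d)
    (fun r r' hr hr' hwin => funext fun j =>
      partialQuotient_eq_of_window hrecVec hr hr' (fun u hu => congrFun (hwin u hu)) j)
    (Set.Finite.pi fun _ : Fin m => Set.finite_Icc (0 : ℤ) B)
    (hB.mono hsub)
  refine fun j => ⟨M + 1, q, hq, fun n hn => ?_⟩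
  have := congrFun (hper (n - 1) (by omega)) j
  rwa [show n - 1 + q + 1 = n + q by omega, show n - 1 + 1 = n by omega] at this
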